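/- Let θ > 1/2. There exists a constant C, depending only on θ, such that for every Schwartz vector field v : ℝ³ → ℝ³ with div v = 0 and vorticity components ω^{mn} = ∂_m v^n − ∂_n v^m, one has ‖v‖_{L^∞} ≤ C · ‖v‖_{L²}^{(θ−1/2)/(θ+1)} · (max_{m,n} [ω^{mn}]_θ)^{(3/2)/(θ+1)}. -/

import Mathlib

open MeasureTheory ENNReal
open scoped RealInnerProductSpace

noncomputable section

/-- Shorthand for Euclidean space `ℝ^d`. -/
abbrev Ed (d : ℕ) := EuclideanSpace ℝ (Fin d)

/-- The homogeneous Besov (Gagliardo) seminorm `[f]_{r,p}`. -/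
def gagliardo (d : ℕ) (r p : ℝ) {F : Type*} [NormedAddCommGroup F] (f : Ed d → F) : ℝ≥0∞ :=
  (∫⁻ x, ∫⁻ y, (‖f x - f y‖₊ : ℝ≥0∞) ^ p / (‖x - y‖₊ : ℝ≥0∞) ^ (r * p + d)) ^ (1 / p)

/-- The homogeneous Hölder seminorm `{f}_r`. -/
def holderSemi (d : ℕ) (r : ℝ) {F : Type*} [NormedAddCommGroup F] (f : Ed d → F) : ℝ≥0∞ :=
  ⨆ x, ⨆ y, (‖f x - f y‖₊ : ℝ≥0∞) / (‖x - y‖₊ : ℝ≥0∞) ^ r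

/-- The Fourier transform `f̂(κ) = ∫ e^{-i x·κ} f(x) dx`. -/
def ftransform (d : ℕ) (f : Ed d → ℂ) (κ : Ed d) : ℂ :=
  ∫ x, Complex.exp (-(Complex.I * (⟪x, κ⟫ : ℂ))) * f x

/-- The homogeneous Sobolev seminorm `[f]_θ = ((2π)^{-d} ∫ |κ|^{2θ} |f̂(κ)|² dκ)^{1/2}`. -/
def sobolevSemi (d : ℕ) (θ : ℝ) (f : Ed d → ℂ) : ℝ≥0∞ :=
  (ENNReal.ofReal ((2 * Real.pi) ^ (-(d : ℝ))) *
    ∫⁻ κ, (‖κ‖₊ : ℝ≥0∞) ^ (2 * θ) * (‖ftransform d f κ‖₊ : ℝ≥0∞) ^ (2 : ℕ)) ^ ((1 : ℝ) / 2)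

/-- A symbol of class `S⁰_{ph}`: smooth away from the origin and positively
homogeneous of degree `0`. -/
def IsSymbol0 (d : ℕ) (a : Ed d → ℂ) : Prop :=
  ContDiffOn ℝ (⊤ : ℕ∞) a {0}ᶜ ∧ ∀ (c : ℝ) (κ : Ed d), 0 < c → κ ≠ 0 → a (c • κ) = a κ

/-- The operator `𝔞[f](x) = (2π)^{-d} ∫ e^{i x·κ} a(κ) f̂(κ) dκ` associated with a symbol. -/
def symbOp (d : ℕ) (a : Ed d → ℂ) (f : Ed d → ℂ) (x : Ed d) : ℂ :=
  (((2 * Real.pi) ^ (-(d : ℝ)) : ℝ) : ℂ) *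
    ∫ κ, Complex.exp (Complex.I * (⟪x, κ⟫ : ℂ)) * a κ * ftransform d f κ

/-- The partial derivative `∂_i f(x)`. -/
def pd (d : ℕ) (i : Fin d) (f : Ed d → ℝ) (x : Ed d) : ℝ :=
  fderiv ℝ f x (EuclideanSpace.single i 1)

/-- The half-wave propagator `(e^{itD} g)(x) = (2π)^{-d} ∫ e^{i x·κ} e^{i t|κ|} ĝ(κ) dκ`. -/
def halfWave (d : ℕ) (t : ℝ) (g : Ed d → ℂ) (x : Ed d) : ℂ :=
  (((2 * Real.pi) ^ (-(d : ℝ)) : ℝ) : ℂ) *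
    ∫ κ, Complex.exp (Complex.I * ((⟪x, κ⟫ : ℂ) + (t : ℂ) * ((‖κ‖ : ℝ) : ℂ))) *
      ftransform d g κ

end

/-!
Fourier inversion bounds `‖f‖_∞` by the `L¹` norm of `f̂`, which the Carlson–Beurling inequality
bounds by `‖f̂‖₂ ^ (1 - d / (2 s)) * ‖|κ| ^ s f̂‖₂ ^ (d / (2 s))` when `2 s > d`: apply
Cauchy–Schwarz with the weight `(1 + |κ|) ^ (2 s)`, whose inverse is integrable, and balance the two
resulting terms by a dilation of `κ`.

For the vector field, `s = θ + 1`. Since `κ · v̂ = 0`,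
`|κ|² v̂ⁿ = ∑ m, κ_m (κ_m v̂ⁿ - κ_n v̂ᵐ)`, so by Cauchy–Schwarz once more
`|κ|² |v̂ⁿ|² ≤ ∑ m, |ω̂ᵐⁿ|²`, that is, the vorticity controls `[vⁿ]_{θ + 1}`.
-/

open scoped SchwartzMap LineDeriv FourierTransform NNReal
open Module

section Carlson

lemma sq_lintegral_le_lintegral_inv_mul_lintegral_mul_sq {α : Type*} [MeasurableSpace α]
    {μ : Measure α} {w u : α → ℝ≥0∞} (hw : AEMeasurable w μ) (hu : AEMeasurable u μ)
    (hw0 : ∀ x, w x ≠ 0) (hwt : ∀ x, w x ≠ ∞) :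
    (∫⁻ x, u x ∂μ) ^ 2 ≤ (∫⁻ x, (w x)⁻¹ ∂μ) * ∫⁻ x, w x * u x ^ 2 ∂μ := by
  have split (x : α) : u x = w x ^ (-(1 / 2) : ℝ) * (w x ^ (1 / 2 : ℝ) * u x) := by
    rw [← mul_assoc, ← ENNReal.rpow_add _ _ (hw0 x) (hwt x)]
    simp
  have hölder := ENNReal.lintegral_mul_le_Lp_mul_Lq μ Real.HolderConjugate.two_two
    (hw.pow_const (-(1 / 2) : ℝ)) ((hw.pow_const (1 / 2 : ℝ)).mul hu)
  simp only [Pi.mul_apply, ← split] at hölder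
  refine (pow_le_pow_left' hölder 2).trans_eq ?_
  simp only [mul_pow, ENNReal.mul_rpow_of_nonneg _ _ zero_le_two, ← ENNReal.rpow_natCast,
    ← ENNReal.rpow_mul]
  norm_num [ENNReal.rpow_neg_one]

variable {E : Type*} [NormedAddCommGroup E] [NormedSpace ℝ E] [FiniteDimensional ℝ E]
  [MeasurableSpace E] [BorelSpace E] (μ : Measure E) [μ.IsAddHaarMeasure]

lemma lintegral_comp_inv_smul (f : E → ℝ≥0∞) {R : ℝ} (hR : 0 < R) :
    ∫⁻ x, f (R⁻¹ • x) ∂μ = ENNReal.ofReal R ^ finrank ℝ E * ∫⁻ x, f x ∂μ := by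
  have hR' : R⁻¹ ≠ 0 := inv_ne_zero hR.ne'
  have hmap := (Homeomorph.smulOfNeZero R⁻¹ hR' (α := E)).measurableEmbedding.lintegral_map
    (μ := μ) f
  simp only [Homeomorph.smulOfNeZero_apply] at hmap
  rw [← hmap, Measure.map_addHaar_smul μ hR', lintegral_smul_measure,
    smul_eq_mul, inv_pow, inv_inv, abs_of_pos (pow_pos hR _), ENNReal.ofReal_pow hR.le]

lemma exists_sq_lintegral_le_mul_add {s : ℝ} (hs : finrank ℝ E < 2 * s) (hs' : 1 ≤ 2 * s) :
    ∃ K : ℝ≥0, ∀ u : E → ℝ≥0∞, Measurable u →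
      (∫⁻ x, u x ∂μ) ^ 2 ≤
        K * (∫⁻ x, u x ^ 2 ∂μ + ∫⁻ x, ‖x‖ₑ ^ (2 * s) * u x ^ 2 ∂μ) := by
  have inv_weight (x : E) :
      ((1 + ‖x‖ₑ) ^ (2 * s))⁻¹ = ENNReal.ofReal ((1 + ‖x‖) ^ (-(2 * s))) := by
    rw [← ENNReal.ofReal_rpow_of_pos (by positivity),
      ENNReal.ofReal_add zero_le_one (norm_nonneg x), ofReal_norm, ENNReal.ofReal_one,
      ENNReal.rpow_neg]
  have hI : ∫⁻ x, ((1 + ‖x‖ₑ) ^ (2 * s))⁻¹ ∂μ ≠ ∞ := by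
    simpa only [inv_weight] using (finite_integral_one_add_norm hs).ne
  have hK : (∫⁻ x, ((1 + ‖x‖ₑ) ^ (2 * s))⁻¹ ∂μ) * 2 ^ (2 * s - 1) ≠ ∞ :=
    ENNReal.mul_ne_top hI (ENNReal.rpow_ne_top_of_nonneg (by linarith) ENNReal.ofNat_ne_top)
  refine ⟨((∫⁻ x, ((1 + ‖x‖ₑ) ^ (2 * s))⁻¹ ∂μ) * 2 ^ (2 * s - 1)).toNNReal, fun u hu ↦ ?_⟩
  rw [ENNReal.coe_toNNReal hK, mul_assoc]
  refine (sq_lintegral_le_lintegral_inv_mul_lintegral_mul_sq (w := fun x ↦ (1 + ‖x‖ₑ) ^ (2 * s))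
    (by fun_prop) hu.aemeasurable (fun x ↦ by simp [ENNReal.rpow_eq_zero_iff])
    (fun x ↦ by simp [ENNReal.rpow_eq_top_iff])).trans ?_
  gcongr
  rw [← lintegral_add_left (by fun_prop), ← lintegral_const_mul _ (by fun_prop)]
  refine lintegral_mono fun x ↦ ?_
  calc (1 + ‖x‖ₑ) ^ (2 * s) * u x ^ 2
      ≤ 2 ^ (2 * s - 1) * (1 ^ (2 * s) + ‖x‖ₑ ^ (2 * s)) * u x ^ 2 := by
        gcongr; exact ENNReal.rpow_add_le_mul_rpow_add_rpow 1 ‖x‖ₑ hs'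
    _ = 2 ^ (2 * s - 1) * (u x ^ 2 + ‖x‖ₑ ^ (2 * s) * u x ^ 2) := by
        rw [ENNReal.one_rpow]; ring

lemma rpow_mul_sq_lintegral_le_of_forall {s : ℝ} (hs : 0 < s) {K : ℝ≥0∞}
    (hK : ∀ u : E → ℝ≥0∞, Measurable u → (∫⁻ x, u x ∂μ) ^ 2 ≤
      K * (∫⁻ x, u x ^ 2 ∂μ + ∫⁻ x, ‖x‖ₑ ^ (2 * s) * u x ^ 2 ∂μ))
    {u : E → ℝ≥0∞} (hu : Measurable u) {t : ℝ≥0∞} (ht0 : t ≠ 0) (ht : t ≠ ∞) :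
    t ^ (finrank ℝ E / (2 * s)) * (∫⁻ x, u x ∂μ) ^ 2 ≤
      K * (∫⁻ x, u x ^ 2 ∂μ + t * ∫⁻ x, ‖x‖ₑ ^ (2 * s) * u x ^ 2 ∂μ) := by
  obtain ⟨R, hR, hRt⟩ : ∃ R : ℝ, 0 < R ∧ ENNReal.ofReal R = t ^ (1 / (2 * s)) := by
    have hr : t ^ (1 / (2 * s)) ≠ ∞ := ENNReal.rpow_ne_top_of_nonneg (by positivity) ht
    exact ⟨_, ENNReal.toReal_pos (by simp [ENNReal.rpow_eq_zero_iff, ht0, ht]) hr,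
      ENNReal.ofReal_toReal hr⟩
  have hRs : ENNReal.ofReal R ^ (2 * s) = t := by
    rw [hRt, ← ENNReal.rpow_mul, one_div_mul_cancel (by positivity), ENNReal.rpow_one]
  have hRn : ENNReal.ofReal R ^ finrank ℝ E = t ^ (finrank ℝ E / (2 * s)) := by
    rw [hRt, ← ENNReal.rpow_natCast, ← ENNReal.rpow_mul, one_div_mul_eq_div]
  have weighted : ∫⁻ x, ‖x‖ₑ ^ (2 * s) * u (R⁻¹ • x) ^ 2 ∂μ =
      ENNReal.ofReal R ^ finrank ℝ E * (t * ∫⁻ x, ‖x‖ₑ ^ (2 * s) * u x ^ 2 ∂μ) := by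
    rw [← lintegral_const_mul _ (by fun_prop), ← lintegral_comp_inv_smul μ _ hR]
    refine lintegral_congr fun x ↦ ?_
    rw [← mul_assoc, ← hRs, ← ENNReal.mul_rpow_of_nonneg _ _ (by positivity),
      ← Real.enorm_of_nonneg hR.le, ← enorm_smul, smul_inv_smul₀ hR.ne']
  have scaled := hK (fun x ↦ u (R⁻¹ • x)) (by fun_prop)
  rw [lintegral_comp_inv_smul μ u hR, lintegral_comp_inv_smul μ (fun x ↦ u x ^ 2) hR, weighted,
    ← mul_add, mul_pow, sq (_ ^ _), mul_assoc, mul_left_comm (K : ℝ≥0∞)] at scaled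
  rw [← hRn]
  have hRn0 : ENNReal.ofReal R ^ finrank ℝ E ≠ 0 := by simp [hR]
  exact (ENNReal.mul_le_mul_iff_right hRn0 (by finiteness)).1 scaled

lemma ae_eq_zero_of_lintegral_enorm_rpow_mul_sq_eq_zero [Nontrivial E] {s : ℝ} {u : E → ℝ≥0∞}
    (hu : Measurable u) (h : ∫⁻ x, ‖x‖ₑ ^ s * u x ^ 2 ∂μ = 0) : u =ᵐ[μ] 0 := by
  rw [lintegral_eq_zero_iff (by fun_prop)] at h
  filter_upwards [h, Measure.ae_ne μ 0] with x hx hx0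
  simpa [ENNReal.rpow_eq_zero_iff, hx0] using hx

lemma le_two_mul_rpow_mul_rpow_of_forall_rpow_mul_le {δ : ℝ} (hδ0 : 0 < δ) (hδ1 : δ < 1)
    {y K A B : ℝ≥0∞} (hA : A = 0 → y = 0) (hB : B = 0 → y = 0)
    (h : ∀ t : ℝ≥0∞, t ≠ 0 → t ≠ ∞ → t ^ δ * y ≤ K * (A + t * B)) :
    y ≤ 2 * K * A ^ (1 - δ) * B ^ δ := by
  have h1δ : 0 < 1 - δ := sub_pos.2 hδ1
  rcases eq_or_ne y 0 with rfl | hy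
  · exact zero_le
  have hA0 : A ≠ 0 := mt hA hy
  have hB0 : B ≠ 0 := mt hB hy
  have hK0 : K ≠ 0 := by
    rintro rfl
    simpa [hy] using h 1 one_ne_zero ENNReal.one_ne_top
  rcases eq_or_ne A ∞ with rfl | hAt
  · simp [ENNReal.top_rpow_of_pos h1δ, ENNReal.mul_top, ENNReal.top_mul, ENNReal.rpow_eq_zero_iff,
      hK0, hB0, hδ0.not_gt]
  rcases eq_or_ne B ∞ with rfl | hBt
  · simp [ENNReal.top_rpow_of_pos hδ0, ENNReal.mul_top, ENNReal.rpow_eq_zero_iff, hK0, hA0, hAt]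
  have balanced := h (A / B) (ENNReal.div_ne_zero.2 ⟨hA0, hBt⟩) (ENNReal.div_ne_top hAt hB0)
  rw [ENNReal.div_mul_cancel hB0 hBt, ENNReal.div_rpow_of_nonneg _ _ hδ0.le] at balanced
  have hAδ : A ^ (1 - δ) * A ^ δ = A := by
    rw [← ENNReal.rpow_add _ _ hA0 hAt, sub_add_cancel, ENNReal.rpow_one]
  have hAδ0 : A ^ δ ≠ 0 := by simp [ENNReal.rpow_eq_zero_iff, hA0, hAt]
  have hBδ0 : B ^ δ ≠ 0 := by simp [ENNReal.rpow_eq_zero_iff, hB0, hBt]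
  have hAδt : A ^ δ ≠ ∞ := ENNReal.rpow_ne_top_of_nonneg hδ0.le hAt
  have hBδt : B ^ δ ≠ ∞ := ENNReal.rpow_ne_top_of_nonneg hδ0.le hBt
  refine (ENNReal.mul_le_mul_iff_right hAδ0 hAδt).1 ?_
  calc A ^ δ * y = B ^ δ * (A ^ δ / B ^ δ * y) := by
        rw [← mul_assoc, ENNReal.mul_div_cancel hBδ0 hBδt]
    _ ≤ B ^ δ * (K * (A + A)) := by gcongr
    _ = B ^ δ * (2 * K * (A ^ (1 - δ) * A ^ δ)) := by rw [hAδ]; ring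
    _ = A ^ δ * (2 * K * A ^ (1 - δ) * B ^ δ) := by ring

theorem exists_sq_lintegral_le_mul_rpow [Nontrivial E] {s : ℝ} (hs : finrank ℝ E < 2 * s) :
    ∃ K : ℝ≥0, ∀ u : E → ℝ≥0∞, Measurable u →
      (∫⁻ x, u x ∂μ) ^ 2 ≤
        K * (∫⁻ x, u x ^ 2 ∂μ) ^ (1 - finrank ℝ E / (2 * s)) *
          (∫⁻ x, ‖x‖ₑ ^ (2 * s) * u x ^ 2 ∂μ) ^ (finrank ℝ E / (2 * s)) := by
  have hn : (1 : ℝ) ≤ finrank ℝ E := mod_cast (finrank_pos : 0 < finrank ℝ E)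
  have hs0 : 0 < s := by linarith
  obtain ⟨K, hK⟩ := exists_sq_lintegral_le_mul_add μ hs (by linarith)
  refine ⟨2 * K, fun u hu ↦ ?_⟩
  have lintegral_eq_zero (hu0 : u =ᵐ[μ] 0) : (∫⁻ x, u x ∂μ) ^ 2 = 0 := by
    simp [lintegral_congr_ae hu0]
  push_cast
  refine le_two_mul_rpow_mul_rpow_of_forall_rpow_mul_le (by positivity)
    ((div_lt_one (by positivity)).2 hs) (fun hA ↦ lintegral_eq_zero ?_)
    (fun hB ↦ lintegral_eq_zero (ae_eq_zero_of_lintegral_enorm_rpow_mul_sq_eq_zero μ hu hB))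
    fun t ↦ rpow_mul_sq_lintegral_le_of_forall μ hs0 hK hu
  simpa [lintegral_eq_zero_iff (hu.pow_const 2), Filter.EventuallyEq] using hA

end Carlson

section Fourier

variable (d : ℕ)

/-- The Haar measure `(2π)^{-d} dκ` on frequency space. With it the transform `ftransform`
satisfies Fourier inversion and Plancherel's identity without further constants. -/
noncomputable def fourierMeasure : Measure (Ed d) :=
  ENNReal.ofReal ((2 * Real.pi) ^ (-(d : ℝ))) • volume

instance : (fourierMeasure d).IsAddHaarMeasure :=
  Measure.IsAddHaarMeasure.smul _ (by simpa using by positivity) ENNReal.ofReal_ne_top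

variable {d}

lemma lintegral_fourierMeasure (g : Ed d → ℝ≥0∞) :
    ∫⁻ κ, g κ ∂fourierMeasure d = ∫⁻ ξ, g ((2 * Real.pi) • ξ) := by
  have hscale := lintegral_comp_inv_smul (volume : Measure (Ed d)) g
    (R := (2 * Real.pi)⁻¹) (by positivity)
  rw [inv_inv] at hscale
  rw [hscale, fourierMeasure, lintegral_smul_measure, smul_eq_mul,
    ← ENNReal.ofReal_pow (by positivity), finrank_euclideanSpace_fin,
    Real.rpow_neg (by positivity), Real.rpow_natCast, inv_pow]

lemma ftransform_eq_fourier (f : Ed d → ℂ) (κ : Ed d) :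
    ftransform d f κ = 𝓕 f ((2 * Real.pi)⁻¹ • κ) := by
  rw [Real.fourier_eq', ftransform]
  refine integral_congr_ae (ae_of_all _ fun x ↦ ?_)
  simp only [smul_eq_mul, inner_smul_right]
  congr 2
  push_cast
  field_simp

lemma ftransform_two_pi_smul (f : Ed d → ℂ) (ξ : Ed d) :
    ftransform d f ((2 * Real.pi) • ξ) = 𝓕 f ξ := by
  rw [ftransform_eq_fourier, inv_smul_smul₀ (by positivity)]

lemma continuous_ftransform (f : 𝓢(Ed d, ℂ)) : Continuous (ftransform d f) := by
  simp only [funext (ftransform_eq_fourier (f : Ed d → ℂ)), ← SchwartzMap.fourier_coe]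
  fun_prop

lemma enorm_le_lintegral_enorm_ftransform (f : 𝓢(Ed d, ℂ)) (x : Ed d) :
    ‖f x‖ₑ ≤ ∫⁻ κ, ‖ftransform d f κ‖ₑ ∂fourierMeasure d := by
  simp only [lintegral_fourierMeasure, ftransform_two_pi_smul, ← SchwartzMap.fourier_coe]
  have inversion : f x = 𝓕⁻ (𝓕 f) x := by
    rw [FourierTransform.fourierInv_fourier_eq]
  rw [inversion, SchwartzMap.fourierInv_coe, Real.fourierInv_eq]
  refine (enorm_integral_le_lintegral_enorm _).trans_eq (lintegral_congr fun ξ ↦ ?_)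
  rw [← ofReal_norm, Circle.norm_smul, ofReal_norm]

lemma eLpNorm_two_sq {α ε : Type*} [MeasurableSpace α] {μ : Measure α} [TopologicalSpace ε]
    [ContinuousENorm ε] (f : α → ε) : eLpNorm f 2 μ ^ 2 = ∫⁻ x, ‖f x‖ₑ ^ 2 ∂μ := by
  simpa using eLpNorm_nnreal_pow_eq_lintegral (f := f) (μ := μ) (p := 2) two_ne_zero

lemma lintegral_enorm_ftransform_sq (f : 𝓢(Ed d, ℂ)) :
    ∫⁻ κ, ‖ftransform d f κ‖ₑ ^ 2 ∂fourierMeasure d = eLpNorm f 2 volume ^ 2 := by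
  simp only [lintegral_fourierMeasure, ftransform_two_pi_smul, ← SchwartzMap.fourier_coe]
  have plancherel := SchwartzMap.norm_fourier_toL2_eq f
  rw [SchwartzMap.norm_toLp, SchwartzMap.norm_toLp, ENNReal.toReal_eq_toReal_iff'
    ((𝓕 f).eLpNorm_lt_top 2 volume).ne (f.eLpNorm_lt_top 2 volume).ne] at plancherel
  rw [← eLpNorm_two_sq, plancherel]

lemma sobolevSemi_sq (θ : ℝ) (f : Ed d → ℂ) :
    sobolevSemi d θ f ^ 2 =
      ∫⁻ κ, ‖κ‖ₑ ^ (2 * θ) * ‖ftransform d f κ‖ₑ ^ 2 ∂fourierMeasure d := by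
  rw [sobolevSemi, ← ENNReal.rpow_natCast, ← ENNReal.rpow_mul, fourierMeasure,
    lintegral_smul_measure]
  simp [enorm_eq_nnnorm]

lemma ftransform_lineDerivOp_single (f : 𝓢(Ed d, ℂ)) (m : Fin d) (κ : Ed d) :
    ftransform d ⇑(∂_{(EuclideanSpace.single m (1 : ℝ) : Ed d)} f : 𝓢(Ed d, ℂ)) κ =
      Complex.I * (κ m • ftransform d f κ) := by
  have hgrowth : (inner ℝ · (EuclideanSpace.single m (1 : ℝ) : Ed d)).HasTemperateGrowth := by
    fun_prop
  simp only [ftransform_eq_fourier, ← SchwartzMap.fourier_coe]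
  rw [SchwartzMap.fourier_lineDerivOp_eq, smul_apply,
    SchwartzMap.smulLeftCLM_apply_apply hgrowth]
  simp only [mul_inv_rev, EuclideanSpace.inner_single_right, PiLp.smul_apply, smul_eq_mul,
    Real.ringHom_apply, one_mul, Complex.real_smul, Complex.ofReal_mul, Complex.ofReal_inv,
    Complex.ofReal_ofNat]
  field_simp

theorem exists_enorm_le_eLpNorm_two_mul_sobolevSemi [NeZero d] {s : ℝ} (hs : d < 2 * s) :
    ∃ C : ℝ≥0, ∀ (f : 𝓢(Ed d, ℂ)) (x : Ed d),
      ‖f x‖ₑ ≤ C * eLpNorm f 2 volume ^ (1 - d / (2 * s)) *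
        sobolevSemi d s f ^ (d / (2 * s)) := by
  obtain ⟨K, hK⟩ := exists_sq_lintegral_le_mul_rpow (fourierMeasure d) (s := s) (by simpa using hs)
  refine ⟨NNReal.sqrt K, fun f x ↦ ?_⟩
  have sq_rpow (a : ℝ≥0∞) (p : ℝ) : (a ^ 2) ^ p = (a ^ p) ^ 2 := by
    simp only [← ENNReal.rpow_natCast, ← ENNReal.rpow_mul, mul_comm]
  have carlson := hK (fun κ ↦ ‖ftransform d f κ‖ₑ) (continuous_ftransform f).measurable.enorm
  rw [lintegral_enorm_ftransform_sq, ← sobolevSemi_sq, finrank_euclideanSpace_fin, sq_rpow,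
    sq_rpow, ← NNReal.sq_sqrt K, ENNReal.coe_pow, ← mul_pow, ← mul_pow,
    ENNReal.pow_le_pow_left_iff two_ne_zero] at carlson
  exact (enorm_le_lintegral_enorm_ftransform f x).trans carlson

end Fourier

section Vorticity

lemma norm_sq_mul_norm_sq_le_sum {ι F : Type*} [Fintype ι] [NormedAddCommGroup F]
    [NormedSpace ℝ F] (κ : EuclideanSpace ℝ ι) {z : ι → F} (hz : ∑ m, κ m • z m = 0) (n : ι) :
    ‖κ‖ ^ 2 * ‖z n‖ ^ 2 ≤ ∑ m, ‖κ m • z n - κ n • z m‖ ^ 2 := by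
  rcases eq_or_ne κ 0 with rfl | hκ
  · simp
  have recover : ∑ m, κ m • (κ m • z n - κ n • z m) = ‖κ‖ ^ 2 • z n := by
    simp_rw [smul_sub, smul_comm _ (κ n), Finset.sum_sub_distrib, ← Finset.smul_sum, hz,
      smul_smul, ← Finset.sum_smul, EuclideanSpace.real_norm_sq_eq, ← sq, smul_zero, sub_zero]
  have cauchySchwarz : ‖‖κ‖ ^ 2 • z n‖ ^ 2 ≤
      ‖κ‖ ^ 2 * ∑ m, ‖κ m • z n - κ n • z m‖ ^ 2 := by
    calc ‖‖κ‖ ^ 2 • z n‖ ^ 2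
        ≤ (∑ m, ‖κ m‖ * ‖κ m • z n - κ n • z m‖) ^ 2 := by
          rw [← recover]
          gcongr
          exact norm_sum_le_of_le _ fun m _ ↦ (norm_smul _ _).le
      _ ≤ ‖κ‖ ^ 2 * ∑ m, ‖κ m • z n - κ n • z m‖ ^ 2 := by
          rw [EuclideanSpace.norm_sq_eq]
          exact Finset.sum_mul_sq_le_sq_mul_sq _ _ _
  rw [norm_smul, mul_pow, norm_pow, norm_norm, sq (‖κ‖ ^ 2), mul_assoc] at cauchySchwarz
  exact le_of_mul_le_mul_left cauchySchwarz (by positivity)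

variable {d : ℕ}

/-- The `n`-th component of a Schwartz vector field, regarded as a complex-valued Schwartz
function so that Fourier analysis applies to it. -/
noncomputable def complexComponent (v : 𝓢(Ed d, Ed d)) (n : Fin d) : 𝓢(Ed d, ℂ) :=
  SchwartzMap.postcompCLM (𝕜 := ℝ)
    (Complex.ofRealCLM ∘L (EuclideanSpace.proj n : Ed d →L[ℝ] ℝ)) v

/-- The vorticity component `ω^{mn} = ∂_m v^n − ∂_n v^m`, with values in `ℂ` because `sobolevSemi`
takes complex-valued functions. -/
noncomputable def vorticity (v : Ed d → Ed d) (m n : Fin d) (x : Ed d) : ℂ :=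
  ((pd d m (fun y ↦ v y n) x - pd d n (fun y ↦ v y m) x : ℝ) : ℂ)

lemma complexComponent_apply (v : 𝓢(Ed d, Ed d)) (n : Fin d) (x : Ed d) :
    complexComponent v n x = (v x n : ℂ) := rfl

lemma lineDerivOp_complexComponent (v : 𝓢(Ed d, Ed d)) (m n : Fin d) (x : Ed d) :
    (∂_{(EuclideanSpace.single m (1 : ℝ) : Ed d)} (complexComponent v n) : 𝓢(Ed d, ℂ)) x =
      (pd d m (fun y ↦ v y n) x : ℂ) := by
  have hcomp := (EuclideanSpace.proj n : Ed d →L[ℝ] ℝ).hasFDerivAt.comp x (v.hasFDerivAt x)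
  have hcomplex := Complex.ofRealCLM.hasFDerivAt.comp x hcomp
  rw [SchwartzMap.lineDerivOp_apply_eq_fderiv, pd]
  exact (congr($hcomplex.fderiv _)).trans (congr(($hcomp.fderiv _ : ℂ))).symm

lemma sum_smul_ftransform_complexComponent_eq_zero {v : 𝓢(Ed d, Ed d)}
    (hv : ∀ x, ∑ i, pd d i (fun y ↦ v y i) x = 0) (κ : Ed d) :
    ∑ m, κ m • ftransform d (complexComponent v m) κ = 0 := by
  have hdiv : ∑ m, ∂_{(EuclideanSpace.single m (1 : ℝ) : Ed d)} (complexComponent v m) = 0 := by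
    ext x
    simp only [sum_apply, lineDerivOp_complexComponent, ← Complex.ofReal_sum, hv,
      Complex.ofReal_zero, zero_apply]
  have transformed : ∑ m, ftransform d
      ⇑(∂_{(EuclideanSpace.single m (1 : ℝ) : Ed d)} (complexComponent v m) : 𝓢(Ed d, ℂ)) κ =
        0 := by
    simp only [ftransform_eq_fourier, ← SchwartzMap.fourier_coe, ← sum_apply,
      ← FourierTransform.fourier_sum, hdiv, FourierTransform.fourier_zero, zero_apply]
  simpa only [ftransform_lineDerivOp_single, ← Finset.mul_sum, mul_eq_zero, Complex.I_ne_zero,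
    false_or] using transformed

lemma ftransform_vorticity (v : 𝓢(Ed d, Ed d)) (m n : Fin d) (κ : Ed d) :
    ftransform d (vorticity v m n) κ =
      Complex.I * (κ m • ftransform d (complexComponent v n) κ -
        κ n • ftransform d (complexComponent v m) κ) := by
  have hω : vorticity v m n =
      ⇑(∂_{(EuclideanSpace.single m (1 : ℝ) : Ed d)} (complexComponent v n) -
        ∂_{(EuclideanSpace.single n (1 : ℝ) : Ed d)} (complexComponent v m) : 𝓢(Ed d, ℂ)) := by
    ext x
    rw [sub_apply, lineDerivOp_complexComponent, lineDerivOp_complexComponent,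
      vorticity, Complex.ofReal_sub]
  rw [hω, mul_sub, ← ftransform_lineDerivOp_single, ← ftransform_lineDerivOp_single]
  simp only [ftransform_eq_fourier, ← SchwartzMap.fourier_coe, sub_eq_add_neg,
    FourierTransform.fourier_add, FourierTransform.fourier_neg, add_apply, neg_apply]

lemma sobolevSemi_complexComponent_sq_le {θ : ℝ} (hθ : 0 < θ + 1) {v : 𝓢(Ed d, Ed d)}
    (hv : ∀ x, ∑ i, pd d i (fun y ↦ v y i) x = 0) (n : Fin d) :
    sobolevSemi d (θ + 1) (complexComponent v n) ^ 2 ≤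
      ∑ m, sobolevSemi d θ (vorticity v m n) ^ 2 := by
  have pointwise (κ : Ed d) :
      ‖κ‖ₑ ^ (2 * (θ + 1)) * ‖ftransform d (complexComponent v n) κ‖ₑ ^ 2 ≤
        ∑ m, ‖κ‖ₑ ^ (2 * θ) * ‖ftransform d (vorticity v m n) κ‖ₑ ^ 2 := by
    rcases eq_or_ne κ 0 with rfl | hκ
    · simp [hθ]
    have hsplit : ‖κ‖ₑ ^ (2 * (θ + 1)) = ‖κ‖ₑ ^ (2 * θ) * ‖κ‖ₑ ^ 2 := by
      rw [mul_add_one, ENNReal.rpow_add _ _ (by simpa) (by simp), ENNReal.rpow_two]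
    rw [hsplit, mul_assoc, ← Finset.mul_sum]
    gcongr
    have recovered := ENNReal.ofReal_le_ofReal <|
      norm_sq_mul_norm_sq_le_sum κ (sum_smul_ftransform_complexComponent_eq_zero hv κ) n
    rw [ENNReal.ofReal_mul (by positivity), ENNReal.ofReal_sum_of_nonneg (by simp)] at recovered
    simpa [ftransform_vorticity, ENNReal.ofReal_pow, enorm_mul, ← ofReal_norm Complex.I]
      using recovered
  have hmeas (m : Fin d) :
      Measurable fun κ ↦ ‖κ‖ₑ ^ (2 * θ) * ‖ftransform d (vorticity v m n) κ‖ₑ ^ 2 := by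
    have := continuous_ftransform (complexComponent v n)
    have := continuous_ftransform (complexComponent v m)
    simp only [ftransform_vorticity]
    fun_prop
  simp only [sobolevSemi_sq, ← lintegral_finsetSum _ fun m _ ↦ hmeas m]
  exact lintegral_mono pointwise

lemma sobolevSemi_complexComponent_le {θ : ℝ} (hθ : 0 < θ + 1) {v : 𝓢(Ed d, Ed d)}
    (hv : ∀ x, ∑ i, pd d i (fun y ↦ v y i) x = 0) (n : Fin d) :
    sobolevSemi d (θ + 1) (complexComponent v n) ≤
      d * ⨆ m, ⨆ n, sobolevSemi d θ (vorticity v m n) := by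
  set M := ⨆ m, ⨆ n, sobolevSemi d θ (vorticity v m n)
  refine (ENNReal.pow_le_pow_left_iff two_ne_zero).1 ?_
  calc sobolevSemi d (θ + 1) (complexComponent v n) ^ 2
      ≤ ∑ m, sobolevSemi d θ (vorticity v m n) ^ 2 := sobolevSemi_complexComponent_sq_le hθ hv n
    _ ≤ ∑ _ : Fin d, M ^ 2 := by
        gcongr with m
        exact le_iSup₂ (f := fun m n ↦ sobolevSemi d θ (vorticity v m n)) m n
    _ = d * M ^ 2 := by simp
    _ ≤ d ^ 2 * M ^ 2 := by
        gcongr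
        exact_mod_cast Nat.le_self_pow two_ne_zero d
    _ = (d * M) ^ 2 := (mul_pow _ _ _).symm

lemma eLpNorm_complexComponent_le (v : 𝓢(Ed d, Ed d)) (n : Fin d) (p : ℝ≥0∞) :
    eLpNorm (complexComponent v n) p volume ≤ eLpNorm v p volume :=
  eLpNorm_mono fun x ↦ by
    simpa [complexComponent_apply] using PiLp.norm_apply_le (v x) n

lemma enorm_le_sum_enorm_complexComponent (v : 𝓢(Ed d, Ed d)) (x : Ed d) :
    ‖v x‖ₑ ≤ ∑ n, ‖complexComponent v n x‖ₑ := by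
  calc ‖v x‖ₑ = ‖∑ n, v x n • EuclideanSpace.basisFun (Fin d) ℝ n‖ₑ := by
        conv_lhs => rw [← (EuclideanSpace.basisFun (Fin d) ℝ).sum_repr (v x)]
        simp only [EuclideanSpace.basisFun_repr]
    _ ≤ ∑ n, ‖v x n • EuclideanSpace.basisFun (Fin d) ℝ n‖ₑ := enorm_sum_le _ _
    _ = ∑ n, ‖complexComponent v n x‖ₑ := by
        simp [complexComponent_apply, norm_smul, ← ofReal_norm]

end Vorticity

theorem stmt14_general (d : ℕ) [NeZero d] (θ : ℝ) (hθ : d / 2 - 1 < θ) :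
    ∃ C : ℝ, 0 < C ∧ ∀ v : 𝓢(Ed d, Ed d),
      (∀ x, ∑ i, pd d i (fun y ↦ v y i) x = 0) →
      (⨆ x, ‖v x‖ₑ) ≤
        ENNReal.ofReal C * eLpNorm v 2 volume ^ ((θ - (d / 2 - 1)) / (θ + 1)) *
          (⨆ m, ⨆ n, sobolevSemi d θ (vorticity v m n)) ^ (d / 2 / (θ + 1)) := by
  have hθ1 : 0 < θ + 1 := by linarith [(Nat.cast_nonneg d : (0 : ℝ) ≤ d)]
  have hδ : d / (2 * (θ + 1)) = d / 2 / (θ + 1) := by field_simp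
  have hδ' : 1 - d / 2 / (θ + 1) = (θ - (d / 2 - 1)) / (θ + 1) := by field_simp; ring
  obtain ⟨C, hC⟩ := exists_enorm_le_eLpNorm_two_mul_sobolevSemi (d := d) (s := θ + 1) (by linarith)
  rw [hδ, hδ'] at hC
  set α := (θ - (d / 2 - 1)) / (θ + 1)
  set β := d / 2 / (θ + 1)
  have hβ0 : 0 ≤ β := by positivity
  refine ⟨d * C * (d : ℝ) ^ β + 1, by positivity, fun v hv ↦ iSup_le fun x ↦ ?_⟩
  set A := eLpNorm v 2 volume
  set M := ⨆ m, ⨆ n, sobolevSemi d θ (vorticity v m n)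
  calc ‖v x‖ₑ ≤ ∑ n, ‖complexComponent v n x‖ₑ := enorm_le_sum_enorm_complexComponent v x
    _ ≤ ∑ _ : Fin d, C * A ^ α * (d * M) ^ β := by
        gcongr with n
        refine (hC (complexComponent v n) x).trans ?_
        gcongr
        · exact eLpNorm_complexComponent_le v n 2
        · exact sobolevSemi_complexComponent_le hθ1 hv n
    _ = ENNReal.ofReal (d * C * (d : ℝ) ^ β) * A ^ α * M ^ β := by
        rw [ENNReal.ofReal_mul (by positivity), ENNReal.ofReal_mul (by positivity),
          ← ENNReal.ofReal_rpow_of_nonneg (by positivity) hβ0, ENNReal.mul_rpow_of_nonneg _ _ hβ0]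
        simp only [Finset.sum_const, Finset.card_univ, Fintype.card_fin, nsmul_eq_mul,
          ENNReal.ofReal_natCast, ENNReal.ofReal_coe_nnreal]
        ring
    _ ≤ _ := by gcongr; linarith

/-- For a divergence-free Schwartz vector field `v` on `ℝ³` and `θ > 1/2`:
`‖v‖_∞ ≤ C ‖v‖₂^{(θ−1/2)/(θ+1)} (max [ω^{mn}]_θ)^{(3/2)/(θ+1)}`. -/
theorem stmt14 (θ : ℝ) (hθ : 1 / 2 < θ) :
    ∃ C : ℝ, 0 < C ∧ ∀ v : SchwartzMap (Ed 3) (Ed 3),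
      (∀ x, ∑ i : Fin 3, pd 3 i (fun y => v y i) x = 0) →
      (⨆ x, (‖v x‖₊ : ℝ≥0∞))
        ≤ ENNReal.ofReal C *
            eLpNorm (⇑v) 2 volume ^ ((θ - 1 / 2) / (θ + 1)) *
            (⨆ m : Fin 3, ⨆ n : Fin 3, sobolevSemi 3 θ
                (fun x => ((pd 3 m (fun y => v y n) x - pd 3 n (fun y => v y m) x : ℝ) : ℂ)))
              ^ ((3 / 2) / (θ + 1)) := by
  have h := stmt14_general 3 θ (by norm_num; linarith)
  rwa [Nat.cast_ofNat, (by norm_num : (3 : ℝ) / 2 - 1 = 1 / 2)] at h
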